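/- arXiv:1309.0422 — 12 statements merged into one kernel-verified Lean document; each statement's English description precedes it below -/
import Mathlib

section
/- Let L be a set of words over the alphabet Σ₃ = {0,1,2} such that every word of L lies in φ(Σ₂*), and let S be a common supersequence of L. Then there exists a word S' over Σ₃ with length |S'| ≤ |S| such that S' is a common supersequence of L and S' ∈ φ(Σ₂*), i.e. S' = φ(w') for some word w' over Σ₂ = {0,1}. -/
/-- The morphism φ : Σ₂* → Σ₃* with φ(0) = 0202 and φ(1) = 1. -/
def phi : List (Fin 2) → List (Fin 3)
  | [] => []
  | a :: w => (if a = 0 then [0, 2, 0, 2] else [1]) ++ phi w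

/-!
Call `f a` the block of `a`, and suppose that no letter occurs in two blocks. Scan `S` while
waiting, for each `a` independently, for the letters of `f a` in order; whenever the last one
arrives, output `a` and start waiting for `f a` afresh. Each letter of `S` serves at most one block,
so the blocks of the output use no more letters than `S` has. If `u.flatMap f` embeds in `S`, then
the scan is always at least as far in the current block as the embedding, so it completes that block
no later.
-/

open Function List

section Sublist

variable {α β : Type*}

theorem append_sublist_cons_iff {c : β} {r v S : List β} (hr : r ≠ []) :
    r ++ v <+ c :: S ↔ r ++ v <+ S ∨ ∃ r', r = c :: r' ∧ r' ++ v <+ S := by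
  obtain ⟨d, r, rfl⟩ := exists_cons_of_ne_nil hr
  simp [sublist_cons_iff, and_assoc]

theorem sublist_of_append_sublist_cons {c : β} {r v S : List β} (hr : r ≠ [])
    (h : r ++ v <+ c :: S) : v <+ S := by
  obtain h | ⟨r', -, h⟩ := (append_sublist_cons_iff hr).1 h
  all_goals exact (sublist_append_right _ _).trans h

theorem tail_suffix_of_suffix_cons {c : β} {l l' : List β} (h : l <:+ c :: l') : l.tail <:+ l' := by
  obtain rfl | h := suffix_cons_iff.1 h
  · exact suffix_rfl
  · exact (tail_suffix l).trans h

theorem flatMap_sublist_of_forall_cons {f : α → List β} {S T : List β}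
    (h : ∀ a (u : List α), f a ≠ [] → f a ++ u.flatMap f <+ S → f a ++ u.flatMap f <+ T)
    {u : List α} (hu : u.flatMap f <+ S) : u.flatMap f <+ T := by
  induction u with
  | nil => exact nil_sublist T
  | cons a u ih =>
    rw [flatMap_cons] at hu ⊢
    by_cases ha : f a = []
    · rw [ha, nil_append] at hu ⊢
      exact ih hu
    · exact h a u ha hu

end Sublist

section GreedyDecode

variable {α β : Type*} {f p : α → List β} {owner : β → α}

/-- A state of the greedy scan: `p a` is the part of the block `f a` still waited for, which is
nonempty unless the block itself is empty. -/
def IsPending (f p : α → List β) : Prop :=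
  ∀ a, p a <:+ f a ∧ (p a = [] → f a = [])

theorem IsPending.refl (f : α → List β) : IsPending f f :=
  fun _ => ⟨suffix_rfl, id⟩

theorem append_sublist_of_owner_ne (howner : ∀ a, ∀ c ∈ f a, owner c = a) {a : α} {c : β}
    {r v S : List β} (hr : r <:+ f a) (hne : r ≠ []) (hc : owner c ≠ a) (h : r ++ v <+ c :: S) :
    r ++ v <+ S := by
  refine ((append_sublist_cons_iff hne).1 h).resolve_right ?_
  rintro ⟨r', rfl, -⟩
  exact hc (howner a c (hr.mem mem_cons_self))

variable [DecidableEq α]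

theorem IsPending.update (hp : IsPending f p) {a : α} {l : List β} (hl : l <:+ f a)
    (hnil : l = [] → f a = []) : IsPending f (update p a l) := by
  intro b
  obtain rfl | hba := eq_or_ne b a
  · simpa only [update_self] using ⟨hl, hnil⟩
  · simpa only [update_of_ne hba] using hp b

theorem IsPending.refill (hp : IsPending f p) (a : α) : IsPending f (Function.update p a (f a)) :=
  hp.update suffix_rfl id

theorem IsPending.tail (hp : IsPending f p) {a : α} {c : β} (hne : p a ≠ [c])
    (hhead : (p a).head? = some c) : IsPending f (Function.update p a (p a).tail) := by
  obtain ⟨t, ht⟩ := head?_eq_some_iff.1 hhead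
  refine hp.update ((tail_suffix _).trans (hp a).1) fun hnil => absurd ?_ hne
  rw [ht, tail_cons] at hnil
  rw [ht, hnil]

variable [DecidableEq β]

/-- The word output by the greedy scan of a word from the state `p`. The only block that a letter
`c` can advance is that of `owner c`. -/
def greedyDecode (f : α → List β) (owner : β → α) : (α → List β) → List β → List α
  | _, [] => []
  | p, c :: S =>
    let a := owner c
    if p a = [c] then a :: greedyDecode f owner (update p a (f a)) S
    else if (p a).head? = some c then greedyDecode f owner (update p a (p a).tail) S
    else greedyDecode f owner p S

theorem count_flatMap_greedyDecode_add_le (howner : ∀ a, ∀ c ∈ f a, owner c = a)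
    (hp : IsPending f p) (S : List β) (x : β) :
    ((greedyDecode f owner p S).flatMap f).count x + (p (owner x)).count x ≤
      S.count x + (f (owner x)).count x := by
  fun_induction greedyDecode f owner p S with
  | case1 p => simpa using (hp _).1.sublist.count_le x
  | case2 p c S a hlast ih =>
    have ih := ih (hp.refill a)
    rw [flatMap_cons, count_append, count_cons]
    obtain hxa | hxa := eq_or_ne (owner x) a
    · rw [hxa, update_self] at ih
      rw [hxa, hlast, count_singleton]
      omega
    · have hcount : (f a).count x = 0 := count_eq_zero.2 fun hx => hxa (howner a x hx)
      rw [update_of_ne hxa] at ih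
      omega
  | case3 p c S a hlast hhead ih =>
    have ih := ih (hp.tail hlast hhead)
    rw [count_cons]
    obtain hxa | hxa := eq_or_ne (owner x) a
    · have hcount : (p a).count x = (p a).tail.count x + if c == x then 1 else 0 := by
        obtain ⟨t, ht⟩ := head?_eq_some_iff.1 hhead
        rw [ht, count_cons, tail_cons]
      rw [hxa, update_self] at ih
      rw [hxa]
      omega
    · rw [update_of_ne hxa] at ih
      omega
  | case4 _ _ _ _ _ _ ih =>
    exact (ih hp).trans (Nat.add_le_add_right count_le_count_cons _)

/-- Here `r` is the part of a block that an embedding has yet to match, and `p a <:+ r` says that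
the scan is at least as far in that block. -/
theorem block_append_sublist_flatMap_greedyDecode (howner : ∀ a, ∀ c ∈ f a, owner c = a)
    (hp : IsPending f p) {a : α} {r S : List β} {u : List α} (hne : p a ≠ [])
    (hpr : p a <:+ r) (hr : r <:+ f a) (h : r ++ u.flatMap f <+ S) :
    f a ++ u.flatMap f <+ (greedyDecode f owner p S).flatMap f := by
  fun_induction greedyDecode f owner p S generalizing a r u with
  | case1 => exact absurd (append_eq_nil_iff.1 (sublist_nil.1 h)).1 (hpr.ne_nil hne)
  | case2 p c S b _ ih =>
    have hp' := hp.refill b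
    rw [flatMap_cons]
    obtain rfl | hab := eq_or_ne a b
    · have hu : u.flatMap f <+ S := sublist_of_append_sublist_cons (hpr.ne_nil hne) h
      exact (flatMap_sublist_of_forall_cons
        (fun a' _ ha' => ih hp' (mt (hp' a').2 ha') (hp' a').1 suffix_rfl) hu).append_left _
    · have hS := append_sublist_of_owner_ne howner hr (hpr.ne_nil hne) hab.symm h
      rw [← update_of_ne hab (f b) p] at hne hpr
      exact (ih hp' hne hpr hr hS).trans (sublist_append_right _ _)
  | case3 p c S b hlast hhead ih =>
    have hp' := hp.tail hlast hhead
    obtain rfl | hab := eq_or_ne a b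
    · have hne' := mt (hp' b).2 (hr.ne_nil (hpr.ne_nil hne))
      obtain hS | ⟨r', rfl, hS⟩ := (append_sublist_cons_iff (hpr.ne_nil hne)).1 h
      · exact ih hp' hne' ((update_self b _ p).symm ▸ (tail_suffix _).trans hpr) hr hS
      · have htail : (p b).tail <:+ r' := tail_suffix_of_suffix_cons hpr
        exact ih hp' hne' ((update_self b _ p).symm ▸ htail) ((suffix_cons c r').trans hr) hS
    · have hS := append_sublist_of_owner_ne howner hr (hpr.ne_nil hne) hab.symm h
      rw [← update_of_ne hab (p b).tail p] at hne hpr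
      exact ih hp' hne hpr hr hS
  | case4 p c S b _ hhead ih =>
    obtain hS | ⟨r', rfl, hS⟩ := (append_sublist_cons_iff (hpr.ne_nil hne)).1 h
    · exact ih hp hne hpr hr hS
    · obtain rfl : b = a := howner a c (hr.mem mem_cons_self)
      have hpr' : p b <:+ r' :=
        (suffix_cons_iff.1 hpr).resolve_left fun hpb => hhead (by rw [hpb, head?_cons])
      exact ih hp hne hpr' ((suffix_cons c r').trans hr) hS

theorem flatMap_sublist_flatMap_greedyDecode (howner : ∀ a, ∀ c ∈ f a, owner c = a)
    {u : List α} {S : List β} (hu : u.flatMap f <+ S) :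
    u.flatMap f <+ (greedyDecode f owner f S).flatMap f :=
  flatMap_sublist_of_forall_cons
    (fun _ _ ha => block_append_sublist_flatMap_greedyDecode howner (.refl f) ha suffix_rfl
      suffix_rfl) hu

theorem flatMap_greedyDecode_subperm (howner : ∀ a, ∀ c ∈ f a, owner c = a) (S : List β) :
    (greedyDecode f owner f S).flatMap f <+~ S :=
  subperm_ext_iff.2 fun x _ => Nat.le_of_add_le_add_right
    (count_flatMap_greedyDecode_add_le howner (.refl f) S x)

end GreedyDecode

theorem exists_owner_of_pairwise_disjoint {α β : Type*} [Nonempty α] {f : α → List β}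
    (hf : Pairwise (List.Disjoint on f)) : ∃ owner : β → α, ∀ a, ∀ c ∈ f a, owner c = a := by
  have howner (c : β) : ∃ b, ∀ a, c ∈ f a → b = a := by
    by_cases hc : ∃ b, c ∈ f b
    · obtain ⟨b, hb⟩ := hc
      exact ⟨b, fun a ha => by_contra fun hba => hf hba hb ha⟩
    · exact ⟨Classical.arbitrary α, fun a ha => absurd ⟨a, ha⟩ hc⟩
  choose owner howner using howner
  exact ⟨owner, fun a c hc => howner c a hc⟩

theorem stmt_0_general {α β : Type*} (f : α → List β) (hf : Pairwise (List.Disjoint on f))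
    (L : Set (List β)) (S : List β) (hL : ∀ w ∈ L, ∃ u : List α, w = u.flatMap f)
    (hS : ∀ w ∈ L, w <+ S) :
    ∃ w' : List α, (∀ w ∈ L, w <+ w'.flatMap f) ∧ w'.flatMap f <+~ S := by
  classical
  cases isEmpty_or_nonempty α
  · refine ⟨[], fun w hw => ?_, nil_subperm⟩
    obtain ⟨u, rfl⟩ := hL w hw
    rw [Subsingleton.elim u []]
  · obtain ⟨owner, howner⟩ := exists_owner_of_pairwise_disjoint hf
    refine ⟨greedyDecode f owner f S, fun w hw => ?_, flatMap_greedyDecode_subperm howner S⟩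
    obtain ⟨u, rfl⟩ := hL w hw
    exact flatMap_sublist_flatMap_greedyDecode howner (hS _ hw)

/-- The images of the letters under `phi`, which exhibit `phi` as a `List.flatMap`. -/
def phiBlock : Fin 2 → List (Fin 3) :=
  ![[0, 2, 0, 2], [1]]

theorem phi_eq_flatMap (w : List (Fin 2)) : phi w = w.flatMap phiBlock := by
  induction w with
  | nil => rfl
  | cons a w ih => fin_cases a <;> simp [phi, phiBlock, ih]

theorem pairwise_disjoint_phiBlock : Pairwise (List.Disjoint on phiBlock) := by
  intro a b hab
  fin_cases a <;> fin_cases b <;> simp_all [onFun, phiBlock]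

theorem stmt_0 (L : Set (List (Fin 3))) (S : List (Fin 3))
    (hL : ∀ w ∈ L, ∃ u : List (Fin 2), w = phi u)
    (hS : ∀ w ∈ L, w.Sublist S) :
    ∃ w' : List (Fin 2), (∀ w ∈ L, w.Sublist (phi w')) ∧ (phi w').length ≤ S.length := by
  simp only [phi_eq_flatMap] at hL ⊢
  obtain ⟨w', hw', hlen⟩ := stmt_0_general phiBlock pairwise_disjoint_phiBlock L S hL hS
  exact ⟨w', hw', hlen.length_le⟩
end

section
/- Let L be a set of words over an alphabet A, let a ∈ A, and assume no word of L contains two consecutive occurrences of a (i.e., the factor aa). If a word of the form x ++ [a,a] ++ y is a common supersequence of L, then x ++ [a] ++ y is also a common supersequence of L. -/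
theorem sublist_append_replicate_append_of_not_infix {A : Type*} {a : A} {m n : ℕ}
    {w x y : List A} (hw : ¬ List.replicate (n + 1) a <:+: w)
    (h : w.Sublist (x ++ List.replicate m a ++ y)) :
    w.Sublist (x ++ List.replicate n a ++ y) := by
  obtain ⟨_, v, rfl, hur, hv⟩ := List.sublist_append_iff.mp h
  obtain ⟨u, r, rfl, hu, hr⟩ := List.sublist_append_iff.mp hur
  -- The letters of `w` matched inside the run of `a`s are consecutive in `w`.
  obtain ⟨k, -, rfl⟩ := List.sublist_replicate_iff.mp hr
  have hkn : k ≤ n := by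
    by_contra! hnk
    have hrun : List.replicate (n + 1) a <:+: List.replicate k a :=
      List.infix_replicate_iff.mpr ⟨by simpa using hnk, by simp⟩
    exact hw (hrun.trans ⟨u, v, rfl⟩)
  exact (hu.append ((List.replicate_sublist_replicate a).mpr hkn)).append hv

theorem stmt_3 {A : Type*} (L : Set (List A)) (a : A) (x y : List A)
    (hL : ∀ w ∈ L, ¬ ([a, a] <:+: w))
    (hS : ∀ w ∈ L, w.Sublist (x ++ [a, a] ++ y)) :
    ∀ w ∈ L, w.Sublist (x ++ [a] ++ y) := fun w hw ↦
  sublist_append_replicate_append_of_not_infix (m := 2) (n := 1) (hL w hw) (hS w hw)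
end

section
/- Let L be a set of words over an alphabet A, let a, b ∈ A, and assume no word of L contains the factor ab (an occurrence of a immediately followed by b). If a word of the form x ++ [a,b] ++ y is a common supersequence of L, then the word x ++ [b,a] ++ y (obtained by swapping the two adjacent letters) is also a common supersequence of L. -/
/-!
A word embedded in `x ++ u ++ y` splits as `p ++ m ++ q` with `m` embedded in `u`. If the word
avoids the factor `u`, then `m` is a proper subsequence of `u`, so `u` may be replaced by any word
that contains all its proper subsequences. For `u = [a, b]` these have at most one letter, and
`[b, a]` contains them all.
-/

theorem sublist_of_subset_of_length_le_one {A : Type*} {m u : List A}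
    (hsub : m ⊆ u) (hlen : m.length ≤ 1) : m.Sublist u := by
  match m with
  | [] => exact List.nil_sublist u
  | [c] => exact List.singleton_sublist.mpr (hsub (List.mem_singleton_self c))

theorem sublist_pair_swap_of_ne {A : Type*} {a b : A} {m : List A}
    (hm : m.Sublist [a, b]) (hne : m ≠ [a, b]) : m.Sublist [b, a] := by
  have hlen : m.length < 2 := lt_of_not_ge fun hge ↦ hne (hm.eq_of_length_le hge)
  have hsub : m ⊆ [b, a] := List.Subset.trans hm.subset (List.Perm.swap b a []).subset
  exact sublist_of_subset_of_length_le_one hsub (Nat.le_of_lt_succ hlen)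

theorem sublist_append_replace_of_not_infix {A : Type*} {u v w x y : List A}
    (huv : ∀ m : List A, m.Sublist u → m ≠ u → m.Sublist v)
    (hw : ¬ u <:+: w) (hS : w.Sublist (x ++ u ++ y)) : w.Sublist (x ++ v ++ y) := by
  obtain ⟨_, q, rfl, hxu, hq⟩ := List.sublist_append_iff.mp hS
  obtain ⟨p, m, rfl, hp, hm⟩ := List.sublist_append_iff.mp hxu
  have hne : m ≠ u := by
    rintro rfl
    exact hw (List.infix_append p m q)
  exact (hp.append (huv m hm hne)).append hq

theorem stmt_4 {A : Type*} (L : Set (List A)) (a b : A) (x y : List A)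
    (hL : ∀ w ∈ L, ¬ ([a, b] <:+: w))
    (hS : ∀ w ∈ L, w.Sublist (x ++ [a, b] ++ y)) :
    ∀ w ∈ L, w.Sublist (x ++ [b, a] ++ y) := fun w hw ↦
  sublist_append_replace_of_not_infix
    (fun _ ↦ sublist_pair_swap_of_ne) (hL w hw) (hS w hw)
end

section
/- Let L be a set of words over Σ₃ = {0,1,2} such that every word of L lies in φ(Σ₂*), and let S be a common supersequence of L. Then there exists a word u over Σ₂ = {0,1} such that ψ(u) is a common supersequence of L and |ψ(u)| ≤ |S|, where ψ : Σ₂* → Σ₃* is the word morphism with ψ(0) = 02 and ψ(1) = 1. (That is, L always has a common supersequence, no longer than S, consisting only of blocks 02 and letters 1.) -/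
/-- The morphism ψ : Σ₂* → Σ₃* with ψ(0) = 02 and ψ(1) = 1. -/
def psi : List (Fin 2) → List (Fin 3)
  | [] => []
  | a :: w => (if a = 0 then [0, 2] else [1]) ++ psi w

/-!
Let `a ∈ {0, 2}`. Deleting the other letter of `{0, 2}` from a word and renaming `a` to `0` is a
left inverse of `ψ` which is monotone for the subsequence order. Hence `ψ v ≤ S` implies
`v ≤ contract a S`, and so `ψ v ≤ ψ (contract a S)`. The word on the right has length
`2 |S|_a + |S|_1`, which is at most `|S|` when `a` is the rarer of the letters `0` and `2` in `S`.
This covers the words `φ v` because `φ(0) = ψ(00)` and `φ(1) = ψ(1)`.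
-/

theorem psi_eq_flatMap (u : List (Fin 2)) :
    psi u = u.flatMap fun a => if a = 0 then [0, 2] else [1] := by
  induction u with
  | nil => rfl
  | cons a u ih => rw [psi, ih, List.flatMap_cons]

theorem psi_sublist_psi {u v : List (Fin 2)} (h : u.Sublist v) : (psi u).Sublist (psi v) := by
  simpa only [psi_eq_flatMap] using h.flatMap _

theorem length_psi (u : List (Fin 2)) : (psi u).length = 2 * u.count 0 + u.count 1 := by
  induction u with
  | nil => rfl
  | cons a u ih =>
    fin_cases a
    · simp [psi, ih, Nat.mul_add, Nat.add_right_comm]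
    · simp [psi, ih, Nat.add_assoc]

theorem exists_phi_eq_psi (v : List (Fin 2)) : ∃ u, phi v = psi u := by
  induction v with
  | nil => exact ⟨[], rfl⟩
  | cons b v ih =>
    obtain ⟨u, hu⟩ := ih
    fin_cases b
    · exact ⟨0 :: 0 :: u, by simp [phi, psi, hu]⟩
    · exact ⟨1 :: u, by simp [phi, psi, hu]⟩

/-- The morphism Σ₃* → Σ₂* sending the letter `a` to `0`, the letter `1` to `1` and every other
letter to the empty word. For `a ∈ {0, 2}` it recovers `u` from `ψ u`, reading each block `02` off
its letter `a`; for `a = 1` the letter `1` goes to `0`. -/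
def contract (a : Fin 3) : List (Fin 3) → List (Fin 2) :=
  List.filterMap fun x => if x = a then some 0 else if x = 1 then some 1 else none

theorem contract_sublist_contract (a : Fin 3) {S T : List (Fin 3)} (h : S.Sublist T) :
    (contract a S).Sublist (contract a T) :=
  h.filterMap _

theorem contract_psi {a : Fin 3} (ha : a ≠ 1) (v : List (Fin 2)) : contract a (psi v) = v := by
  induction v with
  | nil => rfl
  | cons b v ih =>
    rw [contract] at ih ⊢
    fin_cases b
    · obtain rfl | rfl : a = 0 ∨ a = 2 := by lia
      · simp [psi, ih]
      · simp [psi, ih]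
    · simp [psi, ih, ha.symm]

theorem psi_sublist_psi_contract {a : Fin 3} (ha : a ≠ 1) {v : List (Fin 2)} {S : List (Fin 3)}
    (h : (psi v).Sublist S) : (psi v).Sublist (psi (contract a S)) := by
  have hv : v.Sublist (contract a S) := by
    simpa only [contract_psi ha] using contract_sublist_contract a h
  exact psi_sublist_psi hv

theorem count_zero_contract (a : Fin 3) (S : List (Fin 3)) :
    (contract a S).count 0 = S.count a := by
  rw [contract, List.count_filterMap, List.count]
  congr 1 with x
  grind

theorem count_one_contract {a : Fin 3} (ha : a ≠ 1) (S : List (Fin 3)) :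
    (contract a S).count 1 = S.count 1 := by
  rw [contract, List.count_filterMap, List.count]
  congr 1 with x
  grind

theorem length_psi_contract {a : Fin 3} (ha : a ≠ 1) (S : List (Fin 3)) :
    (psi (contract a S)).length = 2 * S.count a + S.count 1 := by
  rw [length_psi, count_zero_contract, count_one_contract ha]

theorem exists_ne_one_two_mul_count_add_count_one_le_length (S : List (Fin 3)) :
    ∃ a ≠ 1, 2 * S.count a + S.count 1 ≤ S.length := by
  have hlen : S.count 0 + S.count 1 + S.count 2 = S.length := by
    simpa [Fin.sum_univ_three] using
      Multiset.sum_count_eq_card (s := Finset.univ) (m := (S : Multiset (Fin 3))) (by simp)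
  rcases le_total (S.count 0) (S.count 2) with h | h
  · exact ⟨0, by decide, by lia⟩
  · exact ⟨2, by decide, by lia⟩

theorem stmt_5_general (L : Set (List (Fin 3))) (S : List (Fin 3))
    (hL : ∀ w ∈ L, ∃ u : List (Fin 2), w = psi u)
    (hS : ∀ w ∈ L, w.Sublist S) :
    ∃ u : List (Fin 2), (∀ w ∈ L, w.Sublist (psi u)) ∧ (psi u).length ≤ S.length := by
  obtain ⟨a, ha, hcount⟩ := exists_ne_one_two_mul_count_add_count_one_le_length S
  refine ⟨contract a S, fun w hw => ?_, (length_psi_contract ha S).trans_le hcount⟩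
  obtain ⟨v, rfl⟩ := hL w hw
  exact psi_sublist_psi_contract ha (hS _ hw)

theorem stmt_5 (L : Set (List (Fin 3))) (S : List (Fin 3))
    (hL : ∀ w ∈ L, ∃ u : List (Fin 2), w = phi u)
    (hS : ∀ w ∈ L, w.Sublist S) :
    ∃ u : List (Fin 2), (∀ w ∈ L, w.Sublist (psi u)) ∧ (psi u).length ≤ S.length :=
  stmt_5_general L S
    (fun w hw => let ⟨v, hv⟩ := hL w hw; hv ▸ exists_phi_eq_psi v) hS
end

section
/- Let n be a positive even integer and let L_n = {S_0, …, S_{n²}} with S_i = (0202)^i 1 (0202)^{n²−i} over Σ₃ = {0,1,2}. Let w be a word over Σ₂ = {0,1} such that S = φ(w) is a common supersequence of L_n, and suppose w contains exactly n² − 1 + k occurrences of 0, where k ≥ 1. Then w contains at least ⌈(n²+1)/k⌉ occurrences of 1; equivalently, S contains at least ⌈(n²+1)/k⌉ occurrences of the letter 1. -/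
/-- `(0202)^k` over Σ₃. -/
def pow0202 (k : ℕ) : List (Fin 3) := (List.replicate k [(0 : Fin 3), 2, 0, 2]).flatten

/-- `S_i = (0202)^i 1 (0202)^{n²-i}`. -/
def Sword (n i : ℕ) : List (Fin 3) := pow0202 i ++ [1] ++ pow0202 (n ^ 2 - i)

/-!
Since `0202` and `1` share no letter, `phi u` embeds in `phi w` only block by block, so `phi`
reflects the subsequence order and the question is about binary words: `w` must contain
`0^i 1 0^(m-i)` for all `i ≤ m`. A fixed `1` of `w` with `c` zeros before it serves only the `i`
with `c + m - w.count 0 ≤ i ≤ c`, which are at most `w.count 0 + 1 - m = k` values, so covering all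
`m + 1` indices takes at least `(m + 1) / k` ones.
-/

open List

section PhiEmbedding

theorem phi_append (u v : List (Fin 2)) : phi (u ++ v) = phi u ++ phi v := by
  induction u with
  | nil => rfl
  | cons a u ih => simp [phi, ih]

theorem phi_replicate_zero (k : ℕ) : phi (replicate k 0) = pow0202 k := by
  induction k with
  | zero => rfl
  | succ k ih => simpa [phi, pow0202, replicate_succ] using ih

theorem phi_replicate_append_one_cons_replicate (i j : ℕ) :
    phi (replicate i 0 ++ 1 :: replicate j 0) = pow0202 i ++ [1] ++ pow0202 j := by
  simp [phi_append, phi, phi_replicate_zero]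

theorem phi_sublist_phi_iff {u w : List (Fin 2)} : phi u <+ phi w ↔ u <+ w := by
  constructor
  · induction w generalizing u with
    | nil => cases u with
      | nil => simp
      | cons a u => fin_cases a <;> simp [phi]
    | cons b w ih => cases u with
      | nil => simp
      | cons a u =>
        intro h
        fin_cases a <;> fin_cases b
        · exact (ih (by simpa [phi] using h)).cons_cons 0
        · exact (ih (by simpa [phi, sublist_cons_iff] using h)).cons 1
        · exact (ih (by simpa [phi, sublist_cons_iff] using h)).cons 0
        · exact (ih (by simpa [phi] using h)).cons_cons 1
  · intro h
    induction h with
    | slnil => exact Sublist.refl _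
    | cons a _ ih => exact ih.trans (sublist_append_right _ _)
    | cons_cons a _ ih => exact ih.append_left _

end PhiEmbedding

section Counting

variable {α : Type*} [DecidableEq α]

theorem append_cons_sublist_iff_exists_mem_idxsOf {b : α} {u v w : List α} :
    u ++ b :: v <+ w ↔ ∃ p ∈ w.idxsOf b, u <+ w.take p ∧ v <+ w.drop (p + 1) := by
  constructor
  · intro h
    obtain ⟨r, s, rfl, hu, hbv⟩ := append_sublist_iff.mp h
    obtain ⟨t, x, rfl, hb, hv⟩ := cons_sublist_iff.mp hbv
    obtain ⟨y, z, rfl⟩ := append_of_mem hb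
    have hsplit : r ++ (y ++ b :: z ++ x) = (r ++ y) ++ b :: (z ++ x) := by simp
    rw [hsplit]
    refine ⟨(r ++ y).length, by simp, ?_, ?_⟩
    · rw [take_left]
      exact hu.trans (sublist_append_left r y)
    · rw [drop_length_add_append, drop_one, tail_cons]
      exact hv.trans (sublist_append_right z x)
  · rintro ⟨p, hp, hu, hv⟩
    obtain ⟨hlt, hpb⟩ := mem_idxsOf_iff_exists_getElem_pos.mp hp
    rw [← take_append_drop p w, drop_eq_getElem_cons hlt, beq_iff_eq.mp hpb]
    exact hu.append (hv.cons_cons b)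

theorem count_take_add_count_drop_succ_le (a : α) (w : List α) (p : ℕ) :
    (w.take p).count a + (w.drop (p + 1)).count a ≤ w.count a := by
  have hdrop : (w.drop (p + 1)).count a ≤ (w.drop p).count a :=
    (drop_sublist_drop_left w p.le_succ).count_le a
  calc
    _ ≤ (w.take p).count a + (w.drop p).count a := by gcongr
    _ = w.count a := by rw [← count_append, take_append_drop]

theorem card_filter_replicate_append_cons_replicate_sublist_le (a b : α) (w : List α) (m : ℕ) :
    {i ∈ Finset.range (m + 1) | replicate i a ++ b :: replicate (m - i) a <+ w}.card ≤
      w.count b * (w.count a + 1 - m) := by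
  let window (p : ℕ) : Finset ℕ :=
    Finset.Icc ((w.take p).count a + m - w.count a) ((w.take p).count a)
  have hcover : {i ∈ Finset.range (m + 1) | replicate i a ++ b :: replicate (m - i) a <+ w} ⊆
      (w.idxsOf b).toFinset.biUnion window := by
    intro i hi
    obtain ⟨p, hp, hbefore, hafter⟩ :=
      append_cons_sublist_iff_exists_mem_idxsOf.mp (Finset.mem_filter.mp hi).2
    rw [replicate_sublist_iff] at hbefore hafter
    have hsplit := count_take_add_count_drop_succ_le a w p
    exact Finset.mem_biUnion.mpr
      ⟨p, mem_toFinset.mpr hp, Finset.mem_Icc.mpr ⟨by omega, hbefore⟩⟩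
  have hwindow (p : ℕ) : (window p).card ≤ w.count a + 1 - m := by
    rw [Nat.card_Icc]
    omega
  calc
    _ ≤ ((w.idxsOf b).toFinset.biUnion window).card := Finset.card_le_card hcover
    _ ≤ (w.idxsOf b).toFinset.card * (w.count a + 1 - m) :=
      Finset.card_biUnion_le_card_mul _ _ _ fun p _ => hwindow p
    _ ≤ w.count b * (w.count a + 1 - m) :=
      Nat.mul_le_mul_right _ ((toFinset_card_le _).trans_eq length_idxsOf)

theorem succ_le_count_mul_of_forall_replicate_append_cons_replicate_sublist
    {a b : α} {w : List α} {m : ℕ}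
    (h : ∀ i ≤ m, replicate i a ++ b :: replicate (m - i) a <+ w) :
    m + 1 ≤ w.count b * (w.count a + 1 - m) := by
  have hall : {i ∈ Finset.range (m + 1) | replicate i a ++ b :: replicate (m - i) a <+ w} =
      Finset.range (m + 1) :=
    Finset.filter_true_of_mem fun i hi => h i (Nat.lt_succ_iff.mp (Finset.mem_range.mp hi))
  simpa only [hall, Finset.card_range] using
    card_filter_replicate_append_cons_replicate_sublist_le a b w m

end Counting

theorem stmt_7_general (m : ℕ) (w : List (Fin 2)) (k : ℕ)
    (hsup : ∀ i ≤ m, (pow0202 i ++ [1] ++ pow0202 (m - i)).Sublist (phi w))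
    (h0 : w.count 0 + 1 = m + k) :
    ⌈((m : ℚ) + 1) / (k : ℚ)⌉ ≤ (w.count 1 : ℤ) := by
  have hbinary (i : ℕ) (hi : i ≤ m) : replicate i 0 ++ 1 :: replicate (m - i) 0 <+ w := by
    rw [← phi_sublist_phi_iff, phi_replicate_append_one_cons_replicate]
    exact hsup i hi
  have hmul : m + 1 ≤ w.count 1 * k := by
    simpa [h0] using
      succ_le_count_mul_of_forall_replicate_append_cons_replicate_sublist hbinary
  rw [Int.ceil_le]
  exact div_le_of_le_mul₀ (by positivity) (by positivity) (by exact_mod_cast hmul)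

theorem stmt_7 (n : ℕ) (hn : 0 < n) (hne : Even n) (w : List (Fin 2)) (k : ℕ)
    (hsup : ∀ i ≤ n ^ 2, (Sword n i).Sublist (phi w))
    (h0 : w.count 0 = n ^ 2 - 1 + k) (hk1 : 1 ≤ k) :
    ⌈((n : ℚ) ^ 2 + 1) / (k : ℚ)⌉ ≤ (w.count 1 : ℤ) := by
  have hpos : 0 < n ^ 2 := Nat.pow_pos hn
  exact_mod_cast stmt_7_general (n ^ 2) w k hsup (by omega)
end

section
/- Let n be a positive even integer and let L_n = {S_0, …, S_{n²}} with S_i = (0202)^i 1 (0202)^{n²−i} over Σ₃ = {0,1,2}. Then the word S_min = 1 ((02)^n 1)^{2n} (02)^{n−2} is a common supersequence of L_n, and its length is 4n² + 4n − 3. -/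
/-- `x^k` : concatenation of `k` copies of the word `x`. -/
def listPow (x : List (Fin 3)) (k : ℕ) : List (Fin 3) := (List.replicate k x).flatten

/-- `S_min = 1 ((02)^n 1)^{2n} (02)^{n-2}`. -/
def Smin (n : ℕ) : List (Fin 3) :=
  [1] ++ listPow (listPow [0, 2] n ++ [1]) (2 * n) ++ listPow [0, 2] (n - 2)

/-!
Write `x = 02`, `y = 1` and `n = 2m`, so that `S_i = x^(2i) y x^(2(n² - i))`. Match the `y` of `S_i`
with the `y` of `S_min = y (x^n y)^(2n) x^(n-2)` that is preceded by exactly `j` blocks `x^n`.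
This works as soon as `2i ≤ jn` and `2(n² - i) ≤ (2n - j)n + (n - 2)`. Dividing by two, these say
`i ≤ jm` and `n² - i < (2n - j)m + m`; since `n² = 2n·m`, they hold for
`2n - j = ⌊(n² - i) / m⌋`.
-/

section Words

open List

variable {α : Type*}

theorem flatten_replicate_add (x : List α) (a b : ℕ) :
    (replicate (a + b) x).flatten = (replicate a x).flatten ++ (replicate b x).flatten := by
  rw [replicate_add, flatten_append]

theorem flatten_replicate_mul (x : List α) (a b : ℕ) :
    (replicate (a * b) x).flatten = (replicate a (replicate b x).flatten).flatten := by
  rw [← flatten_replicate_replicate, flatten_flatten, map_replicate]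

theorem flatten_replicate_sublist_of_le (x : List α) {a b : ℕ} (h : a ≤ b) :
    (replicate a x).flatten <+ (replicate b x).flatten :=
  ((replicate_sublist_replicate x).2 h).flatten

theorem flatten_replicate_sublist_of_sublist {x y : List α} (h : x <+ y) (k : ℕ) :
    (replicate k x).flatten <+ (replicate k y).flatten := by
  induction k with
  | zero => exact Sublist.refl _
  | succ k ih => simpa only [replicate_succ, flatten_cons] using h.append ih

theorem append_flatten_replicate_append (x y : List α) (k : ℕ) :
    y ++ (replicate k (x ++ y)).flatten = (replicate k (y ++ x)).flatten ++ y := by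
  induction k with
  | zero => simp
  | succ k ih => simp only [replicate_succ, flatten_cons, append_assoc, ih]

theorem flatten_replicate_append_sublist (x y : List α) {a j n : ℕ} (ha : a ≤ j * n) :
    (replicate a x).flatten ++ y <+
      y ++ (replicate j ((replicate n x).flatten ++ y)).flatten := by
  rw [append_flatten_replicate_append]
  refine Sublist.append ?_ (Sublist.refl y)
  calc (replicate a x).flatten
    _ <+ (replicate (j * n) x).flatten := flatten_replicate_sublist_of_le x ha
    _ = (replicate j (replicate n x).flatten).flatten := flatten_replicate_mul x j n
    _ <+ (replicate j (y ++ (replicate n x).flatten)).flatten :=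
      flatten_replicate_sublist_of_sublist (sublist_append_right _ _) j

theorem flatten_replicate_sublist_append (x y : List α) {b k n r : ℕ} (hb : b ≤ k * n + r) :
    (replicate b x).flatten <+
      (replicate k ((replicate n x).flatten ++ y)).flatten ++ (replicate r x).flatten := by
  calc (replicate b x).flatten
    _ <+ (replicate (k * n + r) x).flatten := flatten_replicate_sublist_of_le x hb
    _ = (replicate k (replicate n x).flatten).flatten ++ (replicate r x).flatten := by
      rw [flatten_replicate_add, flatten_replicate_mul]
    _ <+ (replicate k ((replicate n x).flatten ++ y)).flatten ++ (replicate r x).flatten :=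
      (flatten_replicate_sublist_of_sublist (sublist_append_left _ _) k).append (Sublist.refl _)

theorem flatten_replicate_append_append_sublist (x y : List α) {a b j k n r : ℕ}
    (ha : a ≤ j * n) (hb : b ≤ k * n + r) :
    (replicate a x).flatten ++ y ++ (replicate b x).flatten <+
      y ++ (replicate (j + k) ((replicate n x).flatten ++ y)).flatten ++
        (replicate r x).flatten := by
  simpa only [flatten_replicate_add, append_assoc] using
    (flatten_replicate_append_sublist x y ha).append (flatten_replicate_sublist_append x y hb)

end Words

theorem exists_add_eq_and_le_mul_and_lt_mul_add {a b m N : ℕ} (hm : 0 < m) (h : a + b = N * m) :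
    ∃ j k, j + k = N ∧ a ≤ j * m ∧ b < k * m + m := by
  have hk : b / m ≤ N := Nat.div_le_of_le_mul (by linarith)
  refine ⟨N - b / m, b / m, Nat.sub_add_cancel hk, ?_, Nat.lt_div_mul_add hm⟩
  have hfloor : b / m * m ≤ b := Nat.div_mul_le_self b m
  rw [Nat.sub_mul]
  omega

theorem pow0202_eq_listPow (k : ℕ) : pow0202 k = listPow [0, 2] (k * 2) :=
  (flatten_replicate_mul [0, 2] k 2).symm

theorem Sword_sublist_Smin {n i : ℕ} (hn : 0 < n) (hne : Even n) (hi : i ≤ n ^ 2) :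
    (Sword n i).Sublist (Smin n) := by
  obtain ⟨m, rfl⟩ := hne
  have hsum : i + ((m + m) ^ 2 - i) = 2 * (m + m) * m := by
    rw [Nat.add_sub_cancel' hi]
    ring
  obtain ⟨j, k, hjk, hleft, hright⟩ :=
    exists_add_eq_and_le_mul_and_lt_mul_add (by omega : 0 < m) hsum
  rw [Sword, Smin, pow0202_eq_listPow, pow0202_eq_listPow, ← hjk]
  apply flatten_replicate_append_append_sublist
  · linarith
  · rw [Nat.mul_add k]
    omega

theorem length_listPow (x : List (Fin 3)) (k : ℕ) : (listPow x k).length = k * x.length := by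
  simp [listPow]

theorem length_Smin {n : ℕ} (hn : 2 ≤ n) : (Smin n).length = 4 * n ^ 2 + 4 * n - 3 := by
  obtain ⟨k, rfl⟩ := Nat.exists_eq_add_of_le' hn
  simp only [Smin, List.length_append, length_listPow, List.length_cons, List.length_nil,
    Nat.add_sub_cancel]
  apply Nat.eq_sub_of_add_eq
  ring

theorem stmt_8 (n : ℕ) (hn : 0 < n) (hne : Even n) :
    (∀ i ≤ n ^ 2, (Sword n i).Sublist (Smin n)) ∧
      (Smin n).length = 4 * n ^ 2 + 4 * n - 3 := by
  have two_le : 2 ≤ n := Nat.le_of_dvd hn hne.two_dvd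
  exact ⟨fun i hi ↦ Sword_sublist_Smin hn hne hi, length_Smin two_le⟩
end

section
/- Let n be a positive even integer and let L_n = {S_0, …, S_{n²}} with S_i = (0202)^i 1 (0202)^{n²−i} over Σ₃ = {0,1,2}. Then every common supersequence of L_n over Σ₃ has length at least 4n² + 4n − 3. (Hence S_min = 1 ((02)^n 1)^{2n} (02)^{n−2} is a shortest common supersequence of L_n.) -/
/-!
Let `S` be a common supersequence, with `r` letters `1` and `m` other letters. Each embedding of
`S_i` sends its `1` to some occurrence of `1` in `S`. If that occurrence has `x` other letters
before it and `y` after it, then `4 * i ≤ x` and `4 * (n ^ 2 - i) ≤ y`, so it serves only the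
indices of the interval from `n ^ 2 - y / 4` to `x / 4`, at most `d = m / 4 + 1 - n ^ 2` of them
because `x + y = m`. Hence `n ^ 2 + 1 ≤ d * r`, and AM-GM bounds `4 * d + r`, thus `m + r`, from
below.
-/

section MarkedPower

variable {α : Type*}

/-- The word `w ^ i a w ^ (N - i)`: the power `w ^ N` with the letter `a` inserted after its
`i`-th factor. Meant for `i ≤ N`, since the subtraction is truncated. -/
def markedPower (w : List α) (a : α) (N i : ℕ) : List α :=
  (List.replicate i w).flatten ++ a :: (List.replicate (N - i) w).flatten

theorem exists_sublist_take_drop_of_append_cons_sublist {u v S : List α} {a : α}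
    (h : (u ++ a :: v).Sublist S) :
    ∃ q, ∃ hq : q < S.length, S[q] = a ∧ u.Sublist (S.take q) ∧ v.Sublist (S.drop (q + 1)) := by
  obtain ⟨A, B, rfl, hu, hav⟩ := List.append_sublist_iff.1 h
  obtain ⟨C, D, rfl, ha, hv⟩ := List.cons_sublist_iff.1 hav
  obtain ⟨C₁, C₂, rfl⟩ := List.append_of_mem ha
  have hsplit : A ++ (C₁ ++ a :: C₂ ++ D) = (A ++ C₁) ++ a :: (C₂ ++ D) := by simp
  rw [hsplit]
  refine ⟨(A ++ C₁).length, by simp, by simp, ?_, ?_⟩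
  · rw [List.take_left]
    exact hu.trans (List.sublist_append_left A C₁)
  · rw [← List.drop_drop, List.drop_left, List.drop_one, List.tail_cons]
    exact hv.trans (List.sublist_append_right C₂ D)

theorem countP_take_add_countP_drop_succ_le (p : α → Bool) (S : List α) (q : ℕ) :
    (S.take q).countP p + (S.drop (q + 1)).countP p ≤ S.countP p := by
  calc (S.take q).countP p + (S.drop (q + 1)).countP p
      ≤ (S.take q).countP p + (S.drop q).countP p := by
        gcongr
        exact (List.drop_sublist_drop_left S q.le_succ).countP_le
    _ = S.countP p := by rw [← List.countP_append, List.take_append_drop]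

variable [DecidableEq α]

theorem succ_le_mul_count_of_markedPower_sublist {w S : List α} {a : α} {N : ℕ} (p : α → Bool)
    (hw : 0 < w.countP p) (hS : ∀ i ≤ N, (markedPower w a N i).Sublist S) :
    N + 1 ≤ (S.countP p / w.countP p + 1 - N) * S.count a := by
  set k := w.countP p
  let served (q : ℕ) : Finset ℕ :=
    Finset.Icc (N - (S.drop (q + 1)).countP p / k) ((S.take q).countP p / k)
  have range_subset : Finset.range (N + 1) ⊆ (S.idxsOf a).toFinset.biUnion served := by
    intro i hi
    have hiN : i ≤ N := Finset.mem_range_succ_iff.1 hi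
    obtain ⟨q, hq, hqa, hu, hv⟩ := exists_sublist_take_drop_of_append_cons_sublist (hS i hiN)
    have h_before : i * k ≤ (S.take q).countP p := by
      simpa [k] using hu.countP_le (p := p)
    have h_after : (N - i) * k ≤ (S.drop (q + 1)).countP p := by
      simpa [k] using hv.countP_le (p := p)
    rw [← Nat.le_div_iff_mul_le hw] at h_before h_after
    have hq_mem : q ∈ (S.idxsOf a).toFinset := by simp [hq, hqa]
    exact Finset.mem_biUnion.2 ⟨q, hq_mem, Finset.mem_Icc.2 ⟨by omega, h_before⟩⟩
  have card_served (q : ℕ) : (served q).card ≤ S.countP p / k + 1 - N := by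
    have h_quot : (S.take q).countP p / k + (S.drop (q + 1)).countP p / k ≤ S.countP p / k :=
      Nat.div_add_div_le_add_div.trans
        (Nat.div_le_div_right (countP_take_add_countP_drop_succ_le p S q))
    rw [Nat.card_Icc]
    omega
  calc N + 1 = (Finset.range (N + 1)).card := (Finset.card_range _).symm
    _ ≤ ((S.idxsOf a).toFinset.biUnion served).card := Finset.card_le_card range_subset
    _ ≤ (S.idxsOf a).toFinset.card * (S.countP p / k + 1 - N) :=
        Finset.card_biUnion_le_card_mul _ _ _ fun q _ => card_served q
    _ ≤ S.count a * (S.countP p / k + 1 - N) := by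
        gcongr
        exact (List.toFinset_card_le _).trans_eq List.length_idxsOf
    _ = (S.countP p / k + 1 - N) * S.count a := mul_comm _ _

theorem count_add_countP_ne (a : α) (S : List α) :
    S.count a + S.countP (· ≠ a) = S.length := by
  simp [List.length_eq_countP_add_countP (· == a), List.count]

theorem four_mul_mul_succ_le_sq_of_markedPower_sublist {w S : List α} {a : α} {N k : ℕ}
    (hw : w.countP (· ≠ a) = k) (hS : ∀ i ≤ N, (markedPower w a N i).Sublist S) :
    4 * k * (N + 1) ≤ (S.length + k - k * N) ^ 2 := by
  rcases k.eq_zero_or_pos with rfl | hk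
  · simp
  have hcard := succ_le_mul_count_of_markedPower_sublist (· ≠ a) (hw ▸ hk) hS
  rw [hw] at hcard
  set m := S.countP (· ≠ a)
  set r := S.count a
  set d := m / k + 1 - N
  have hlen : r + m = S.length := count_add_countP_ne a S
  have hd_pos : 0 < d := Nat.pos_of_mul_pos_right (N.succ_pos.trans_le hcard)
  have hsum : k * d + r ≤ S.length + k - k * N := by
    have h_expand : k * d + k * N = k * (m / k) + k := by
      rw [← mul_add, show d + N = m / k + 1 by omega, mul_add_one]
    have h_div : k * (m / k) ≤ m := Nat.mul_div_le m k
    omega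
  calc 4 * k * (N + 1) ≤ 4 * k * (d * r) := by gcongr
    _ = 4 * (k * d) * r := by ring
    _ ≤ (k * d + r) ^ 2 := four_mul_le_sq_add _ _
    _ ≤ (S.length + k - k * N) ^ 2 := by gcongr

end MarkedPower

theorem sword_eq_markedPower (n i : ℕ) : Sword n i = markedPower [0, 2, 0, 2] 1 (n ^ 2) i := by
  simp [Sword, markedPower, pow0202]

theorem stmt_9_general (n : ℕ) (S : List (Fin 3)) (hS : ∀ i ≤ n ^ 2, (Sword n i).Sublist S) :
    4 * n ^ 2 + 4 * n ≤ S.length + 3 := by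
  simp only [sword_eq_markedPower] at hS
  have hsq : 4 * 4 * (n ^ 2 + 1) ≤ (S.length + 4 - 4 * n ^ 2) ^ 2 :=
    four_mul_mul_succ_le_sq_of_markedPower_sublist (by decide) hS
  have hroot : 4 * n < S.length + 4 - 4 * n ^ 2 :=
    lt_of_pow_lt_pow_left₀ 2 (Nat.zero_le _) (by linarith)
  omega

theorem stmt_9 (n : ℕ) (hn : 0 < n) (hne : Even n) :
    ∀ S : List (Fin 3), (∀ i ≤ n ^ 2, (Sword n i).Sublist S) →
      4 * n ^ 2 + 4 * n - 3 ≤ S.length :=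
  fun S hS => Nat.sub_le_of_le_add (stmt_9_general n S hS)
end

section
/- For all positive integers k and n, k + 4·⌈(n²+1)/k⌉ ≥ 4n + 1. -/
/-!
If `x ^ 2 < y`, then `c = ⌈y / k⌉` satisfies `(2 * x) ^ 2 < k * (4 * c)`, so by AM-GM the sum
`k + 4 * c` exceeds `2 * (2 * x)`. Over the integers this strict inequality gains the extra `1`.
-/

theorem two_mul_lt_add_of_sq_lt_mul {R : Type*} [CommRing R] [LinearOrder R] [IsStrictOrderedRing R]
    {x a b : R} (hab : 0 ≤ a + b) (h : x ^ 2 < a * b) : 2 * x < a + b := by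
  refine lt_of_pow_lt_pow_left₀ 2 hab ?_
  calc
    (2 * x) ^ 2 = 4 * x ^ 2 := by ring
    _ < 4 * (a * b) := by gcongr
    _ = 4 * a * b := by ring
    _ ≤ (a + b) ^ 2 := four_mul_le_sq_add a b

theorem le_mul_ceil_div {K : Type*} [Field K] [LinearOrder K] [IsStrictOrderedRing K]
    [FloorRing K] {k : K} (hk : 0 < k) (y : K) : y ≤ k * ⌈y / k⌉ :=
  (div_le_iff₀' hk).mp (Int.le_ceil (y / k))

theorem stmt_10_general {K : Type*} [Field K] [LinearOrder K] [IsStrictOrderedRing K]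
    [FloorRing K] {x y k : K} (hk : 0 < k) (hxy : x ^ 2 < y) :
    4 * x < k + 4 * ⌈y / k⌉ := by
  have hy : 0 < y := (sq_nonneg x).trans_lt hxy
  have hceil : (0 : K) < ⌈y / k⌉ := Int.cast_pos.mpr (Int.ceil_pos.mpr (div_pos hy hk))
  have hsq : (2 * x) ^ 2 < k * (4 * ⌈y / k⌉) := by
    linarith only [hxy.trans_le (le_mul_ceil_div hk y)]
  have hsum : 0 ≤ k + 4 * (⌈y / k⌉ : K) := by linarith only [hk, hceil]
  linarith only [two_mul_lt_add_of_sq_lt_mul hsum hsq]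

theorem stmt_10 (k n : ℕ) (hk : 0 < k) (hn : 0 < n) :
    4 * (n : ℤ) + 1 ≤ (k : ℤ) + 4 * ⌈((n : ℚ) ^ 2 + 1) / (k : ℚ)⌉ := by
  have hkq : (0 : ℚ) < k := Nat.cast_pos.mpr hk
  exact_mod_cast stmt_10_general hkq (lt_add_one ((n : ℚ) ^ 2))
end

section
/- Let n be a positive integer and, for i ∈ [1:n], let A_i = (0202)^{6n(i−1)+3n} 1 (0202)^{6n(n+1−i)} over Σ₃ = {0,1,2}. Then the word ((02)^{6n} 1 (02)^{6n})^n (02)^{6n} is a common supersequence of {A_i : i ∈ [1:n]}. -/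
/-- `(02)^k` over Σ₃. -/
def pow02 (k : ℕ) : List (Fin 3) := (List.replicate k [(0 : Fin 3), 2]).flatten

/-- `A_i = (0202)^{6n(i-1)+3n} 1 (0202)^{6n(n+1-i)}`. -/
def Aword (n i : ℕ) : List (Fin 3) :=
  pow0202 (6 * n * (i - 1) + 3 * n) ++ [1] ++ pow0202 (6 * n * (n + 1 - i))

/-!
The superword is `n` blocks `u ^ c * v * u ^ c` followed by `u ^ c`, with `u = 02`, `v = 1` and
`c = 6 * n`. Match the `v` of `A_i` with the one in the `i`-th block. A block whose `v` is not used
still provides `u ^ (2 * c)`, so exactly `2 * c * (i - 1) + c` copies of `u` are available before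
the matched `v`, and `c + 2 * c * (n - i) + c = 2 * c * (n + 1 - i)` after it.
-/

section WordPow

open scoped List

variable {α : Type*}

/-- The power `w ^ k` of a word, in the form in which `pow02` and `pow0202` unfold to powers of
the words `02` and `0202`. -/
def wordPow (w : List α) (k : ℕ) : List α := (List.replicate k w).flatten

theorem wordPow_succ (w : List α) (k : ℕ) : wordPow w (k + 1) = w ++ wordPow w k := by
  rw [wordPow, List.replicate_succ, List.flatten_cons, wordPow]

theorem wordPow_add (w : List α) (a b : ℕ) :
    wordPow w (a + b) = wordPow w a ++ wordPow w b := by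
  simp only [wordPow, List.replicate_add, List.flatten_append]

theorem wordPow_mul (w : List α) (a b : ℕ) :
    wordPow w (a * b) = wordPow (wordPow w a) b := by
  induction b with
  | zero => rfl
  | succ b ih => rw [Nat.mul_succ, Nat.add_comm, wordPow_add, ih, wordPow_succ]

theorem wordPow_sublist_wordPow {w x : List α} (h : w <+ x) (k : ℕ) :
    wordPow w k <+ wordPow x k := by
  induction k with
  | zero => exact List.Sublist.refl _
  | succ k ih => simpa only [wordPow_succ] using h.append ih

theorem wordPow_two_mul_sublist_block (u v : List α) (c : ℕ) :
    wordPow u (2 * c) <+ wordPow u c ++ v ++ wordPow u c := by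
  rw [Nat.two_mul, wordPow_add]
  exact (List.sublist_append_left _ v).append_right _

theorem wordPow_two_mul_mul_sublist_wordPow_block (u v : List α) (c k : ℕ) :
    wordPow u (2 * c * k) <+ wordPow (wordPow u c ++ v ++ wordPow u c) k := by
  rw [wordPow_mul]
  exact wordPow_sublist_wordPow (wordPow_two_mul_sublist_block u v c) k

theorem stmt_12_general (u v : List α) (c : ℕ) {n i : ℕ} (hi : 1 ≤ i) (hin : i ≤ n) :
    wordPow u (2 * c * (i - 1) + c) ++ v ++ wordPow u (2 * c * (n + 1 - i)) <+
      wordPow (wordPow u c ++ v ++ wordPow u c) n ++ wordPow u c := by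
  set block := wordPow u c ++ v ++ wordPow u c with hblock
  have unused_blocks (k : ℕ) : wordPow u (2 * c * k) <+ wordPow block k :=
    wordPow_two_mul_mul_sublist_wordPow_block u v c k
  have hn : n = (i - 1) + ((n - i) + 1) := by omega
  have hsuffix : 2 * c * (n + 1 - i) = c + (2 * c * (n - i) + c) := by
    rw [Nat.sub_add_comm hin]
    ring
  calc
    _ = wordPow u (2 * c * (i - 1)) ++ (block ++ (wordPow u (2 * c * (n - i)) ++ wordPow u c)) := by
      simp only [hsuffix, hblock, wordPow_add, List.append_assoc]
    _ <+ wordPow block (i - 1) ++ (block ++ (wordPow block (n - i) ++ wordPow u c)) :=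
      (unused_blocks (i - 1)).append (((unused_blocks (n - i)).append_right _).append_left _)
    _ = wordPow block n ++ wordPow u c := by
      conv_rhs => rw [hn, wordPow_add, wordPow_succ]
      simp only [List.append_assoc]

end WordPow

theorem pow0202_eq_wordPow (k : ℕ) : pow0202 k = wordPow [0, 2] (2 * k) :=
  (wordPow_mul [0, 2] 2 k).symm

theorem Aword_eq_wordPow (n i : ℕ) :
    Aword n i = wordPow [0, 2] (2 * (6 * n) * (i - 1) + 6 * n) ++ [1] ++
      wordPow [0, 2] (2 * (6 * n) * (n + 1 - i)) := by
  have hprefix : 2 * (6 * n * (i - 1) + 3 * n) = 2 * (6 * n) * (i - 1) + 6 * n := by ring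
  rw [Aword, pow0202_eq_wordPow, pow0202_eq_wordPow, hprefix, mul_assoc 2 (6 * n) (n + 1 - i)]

theorem stmt_12 (n : ℕ) (hn : 0 < n) :
    ∀ i, 1 ≤ i → i ≤ n →
      (Aword n i).Sublist
        ((List.replicate n (pow02 (6 * n) ++ [1] ++ pow02 (6 * n))).flatten
          ++ pow02 (6 * n)) := by
  intro i hi hin
  rw [Aword_eq_wordPow]
  exact stmt_12_general [0, 2] [1] (6 * n) hi hin
end

section
/- Let G, n, m, L and k be as in the context. If G has a vertex cover of size at most k, then L has a common supersequence over Σ₃ of length at most 168n² + 37n − 3 + k. -/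
/-- `B_j = (0202)^j 1 (0202)^{36n²-j}`. -/
def Bword (n j : ℕ) : List (Fin 3) := pow0202 j ++ [1] ++ pow0202 (36 * n ^ 2 - j)

/-- `X_i^j = A_i B_j`. -/
def Xword (n i j : ℕ) : List (Fin 3) := Aword n i ++ Bword n j

/-- `T_l` for the edge `e_l = v_i v_j`, `i < j`. -/
def Tword (n i j : ℕ) : List (Fin 3) :=
  pow0202 (6 * n * (i - 1)) ++ [1] ++ pow0202 (6 * n * (j - i - 1) + 3 * n) ++ [1]
    ++ pow0202 (6 * n * (n + 2 - j)) ++ pow0202 (36 * n ^ 2 - 1)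

/-!
The supersequence consists of `42n² + 6n - 1` blocks `0202` with a single letter `1` inserted at
some of the boundaries between blocks. For every vertex `v_i`, boundary `6n(i-1) + 3n` carries a
`1`; if `v_i` lies in the cover, so does boundary `6n(i-1)`. Beyond these, `12n + 1` further letters
`1` are placed at distance `3n` from each other.

In `X_i^j` the first `1` is matched exactly with that of `v_i`, and the second is pushed to the
right by fewer than `3n` blocks, which the `3n - 1` spare blocks of the supersequence pay for. In
the word of an edge `v_i v_j`, both letters `1` are matched among the vertex boundaries. If `v_i` is
in the cover, the first `1` goes to its extra boundary `6n(i-1)`, and the second to the regular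
boundary of `v_{j-1}`. If `v_j` is in the cover, the first `1` goes to the regular boundary of
`v_i`, a shift of `3n`, and the second to the extra boundary `6n(j-1)` of `v_j`.
-/

section MarkedWord

open scoped List

variable {α : Type*} (u : List α) (x : α) (Q : Finset ℕ) {a b c p q N : ℕ}

/-- The letters inserted at position `i` when the positions in `Q` are marked by a letter `x`. -/
def markAt (i : ℕ) : List α := if i ∈ Q then [x] else []

/-- The blocks numbered `p, …, q - 1`, each a copy of `u` preceded by a letter `x` if its number
lies in `Q`. Two consecutive runs of blocks concatenate to a run, so subsequences of a marked word
can be found piecewise. -/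
def markedBlocks (p q : ℕ) : List α := (List.Ico p q).flatMap fun i => markAt x Q i ++ u

/-- The word `u ⋯ u` of `N` blocks in which a letter `x` is inserted at each boundary whose number
lies in `Q`. The boundary `i` is the one after `i` blocks; both ends `0` and `N` are boundaries. -/
def markedWord (N : ℕ) : List α := markedBlocks u x Q 0 N ++ markAt x Q N

theorem markedBlocks_append_markedBlocks (hpq : p ≤ q) (hqN : q ≤ N) :
    markedBlocks u x Q p q ++ markedBlocks u x Q q N = markedBlocks u x Q p N := by
  rw [markedBlocks, markedBlocks, ← List.flatMap_append, List.Ico.append_consecutive hpq hqN,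
    markedBlocks]

theorem markedBlocks_eq_append (hpq : p < q) :
    markedBlocks u x Q p q = markAt x Q p ++ (u ++ markedBlocks u x Q (p + 1) q) := by
  rw [markedBlocks, List.Ico.eq_cons hpq, List.flatMap_cons, List.append_assoc, markedBlocks]

theorem length_markAt (i : ℕ) : (markAt x Q i).length = if i ∈ Q then 1 else 0 := by
  rw [markAt]
  split_ifs <;> rfl

theorem length_markedBlocks_zero (N : ℕ) :
    (markedBlocks u x Q 0 N).length = N * u.length + N.count (· ∈ Q) := by
  induction N with
  | zero => simp [markedBlocks]
  | succ N ih =>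
    rw [← markedBlocks_append_markedBlocks u x Q N.zero_le N.le_succ, List.length_append, ih,
      markedBlocks, List.Ico.succ_singleton, List.flatMap_singleton, List.length_append,
      length_markAt, Nat.count_succ]
    ring

theorem length_markedWord_le (N : ℕ) :
    (markedWord u x Q N).length ≤ N * u.length + Q.card := by
  have hcount : (N + 1).count (· ∈ Q) ≤ Q.card := by
    rw [Nat.count_eq_card_filter_range]
    exact Finset.card_le_card fun i hi => (Finset.mem_filter.1 hi).2
  rw [markedWord, List.length_append, length_markedBlocks_zero, length_markAt, add_assoc,
    ← Nat.count_succ]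
  exact Nat.add_le_add_left hcount _

theorem flatten_replicate_sublist_markedBlocks (hb : p + b ≤ q) :
    (List.replicate b u).flatten <+ markedBlocks u x Q p q := by
  induction b generalizing p with
  | zero => simp
  | succ b ih =>
    rw [markedBlocks_eq_append u x Q (by omega), List.replicate_succ, List.flatten_cons]
    exact ((ih (by omega)).append_left u).trans (List.sublist_append_right _ _)

variable {Q}

theorem cons_flatten_replicate_sublist_markedBlocks (hp : p ∈ Q) (hpq : p < q) (hb : p + b ≤ q) :
    x :: (List.replicate b u).flatten <+ markedBlocks u x Q p q := by
  rw [markedBlocks_eq_append u x Q hpq, markAt, if_pos hp, List.singleton_append,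
    List.cons_sublist_cons]
  cases b with
  | zero => simp
  | succ b =>
    rw [List.replicate_succ, List.flatten_cons]
    exact (flatten_replicate_sublist_markedBlocks u x Q (by omega)).append_left u

theorem cons_flatten_replicate_sublist_markedBlocks_append_markAt (hp : p ∈ Q) (hc : p + c ≤ N) :
    x :: (List.replicate c u).flatten <+ markedBlocks u x Q p N ++ markAt x Q N := by
  rcases (Nat.le_of_add_right_le hc).eq_or_lt with rfl | hpN
  · obtain rfl : c = 0 := by omega
    simp [markAt, hp]
  · exact (cons_flatten_replicate_sublist_markedBlocks u x hp hpN hc).trans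
      (List.sublist_append_left _ _)

theorem two_marks_sublist_markedWord (hp : p ∈ Q) (hq : q ∈ Q) (hpq : p < q) (ha : a ≤ p)
    (hb : p + b ≤ q) (hc : q + c ≤ N) :
    (List.replicate a u).flatten ++ x :: (List.replicate b u).flatten ++
      x :: (List.replicate c u).flatten <+ markedWord u x Q N := by
  rw [markedWord, ← markedBlocks_append_markedBlocks u x Q q.zero_le (by omega),
    ← markedBlocks_append_markedBlocks u x Q p.zero_le hpq.le, List.append_assoc _ _ (markAt x Q N)]
  exact ((flatten_replicate_sublist_markedBlocks u x Q (by omega)).append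
    (cons_flatten_replicate_sublist_markedBlocks u x hp hpq hb)).append
    (cons_flatten_replicate_sublist_markedBlocks_append_markAt u x hq hc)

end MarkedWord

theorem pow0202_add (a b : ℕ) : pow0202 (a + b) = pow0202 a ++ pow0202 b := by
  rw [pow0202, List.replicate_add, List.flatten_append, pow0202, pow0202]

theorem Xword_eq (n i j : ℕ) :
    Xword n i j = pow0202 (6 * n * (i - 1) + 3 * n) ++ 1 :: pow0202 (6 * n * (n + 1 - i) + j) ++
      1 :: pow0202 (36 * n ^ 2 - j) := by
  simp [Xword, Aword, Bword, pow0202_add]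

theorem Tword_eq (n i j : ℕ) :
    Tword n i j = pow0202 (6 * n * (i - 1)) ++ 1 :: pow0202 (6 * n * (j - i - 1) + 3 * n) ++
      1 :: pow0202 (6 * n * (n + 2 - j) + (36 * n ^ 2 - 1)) := by
  simp [Tword, pow0202_add]

/-- The boundaries at which the supersequence built from the vertex set `V` carries a letter `1`:
one for each vertex, an additional one for each vertex in `V`, and a tail of `12n + 1` boundaries
spaced `3n` apart. The tail starts `3n - 1` blocks after the place `6n² + 3n` at which `B_j` starts
in `X_i^j`, so that the boundary for `t = ⌊j / 3n⌋` always lies at or beyond the second `1`. -/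
def coverMarks (n : ℕ) (V : Finset ℕ) : Finset ℕ :=
  (Finset.Icc 1 n).image (fun i => 6 * n * (i - 1) + 3 * n) ∪
    V.image (fun i => 6 * n * (i - 1)) ∪
    (Finset.range (12 * n + 1)).image (fun t => 6 * n ^ 2 + 6 * n - 1 + 3 * n * t)

/-- The common supersequence built from the vertex set `V`. Its length `42n² + 6n - 1`, counted in
blocks, is the position of the last tail boundary. -/
def coverSupersequence (n : ℕ) (V : Finset ℕ) : List (Fin 3) :=
  markedWord [0, 2, 0, 2] 1 (coverMarks n V) (42 * n ^ 2 + 6 * n - 1)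

section CoverSupersequence

variable {n i j t : ℕ} {V : Finset ℕ}

theorem vertex_mem_coverMarks (V : Finset ℕ) (hi : 1 ≤ i) (hin : i ≤ n) :
    6 * n * (i - 1) + 3 * n ∈ coverMarks n V :=
  Finset.mem_union_left _ <| Finset.mem_union_left _ <|
    Finset.mem_image_of_mem _ (Finset.mem_Icc.2 ⟨hi, hin⟩)

theorem cover_mem_coverMarks (n : ℕ) (hi : i ∈ V) : 6 * n * (i - 1) ∈ coverMarks n V :=
  Finset.mem_union_left _ <| Finset.mem_union_right _ <| Finset.mem_image_of_mem _ hi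

theorem tail_mem_coverMarks (V : Finset ℕ) (ht : t ≤ 12 * n) :
    6 * n ^ 2 + 6 * n - 1 + 3 * n * t ∈ coverMarks n V :=
  Finset.mem_union_right _ <| Finset.mem_image_of_mem _ (Finset.mem_range_succ_iff.2 ht)

theorem card_coverMarks_le (n : ℕ) (V : Finset ℕ) :
    (coverMarks n V).card ≤ n + V.card + (12 * n + 1) := by
  refine (Finset.card_union_le _ _).trans <| add_le_add
    ((Finset.card_union_le _ _).trans <| add_le_add ?_ Finset.card_image_le) ?_
  · simpa only [Nat.card_Icc, Nat.add_sub_cancel] using Finset.card_image_le (s := Finset.Icc 1 n)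
  · simpa only [Finset.card_range] using Finset.card_image_le (s := Finset.range (12 * n + 1))

theorem length_coverSupersequence_le (hn : 1 ≤ n) (V : Finset ℕ) :
    (coverSupersequence n V).length ≤ 168 * n ^ 2 + 37 * n - 3 + V.card := by
  have hlen : (coverSupersequence n V).length ≤
      (42 * n ^ 2 + 6 * n - 1) * 4 + (coverMarks n V).card :=
    length_markedWord_le _ _ _ _
  have hmarks := card_coverMarks_le n V
  omega

theorem Xword_sublist_coverSupersequence (V : Finset ℕ) (hi : 1 ≤ i) (hin : i ≤ n)
    (hj : j ≤ 36 * n ^ 2) : (Xword n i j).Sublist (coverSupersequence n V) := by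
  have hmod : j % (3 * n) < 3 * n := Nat.mod_lt _ (by omega)
  have hdiv : 3 * n * (j / (3 * n)) + j % (3 * n) = j := Nat.div_add_mod _ _
  have ht : j / (3 * n) ≤ 12 * n := Nat.div_le_of_le_mul (hj.trans_eq (by ring))
  have hgap : 6 * n * (i - 1) + 6 * n * (n + 1 - i) = 6 * n ^ 2 := by
    rw [← mul_add, show i - 1 + (n + 1 - i) = n by omega]
    ring
  rw [Xword_eq]
  refine two_marks_sublist_markedWord _ _ (vertex_mem_coverMarks V hi hin)
    (tail_mem_coverMarks V ht) ?_ ?_ ?_ ?_ <;> omega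

theorem Tword_sublist_coverSupersequence (hi : 1 ≤ i) (hij : i < j) (hjn : j ≤ n)
    (hV : i ∈ V ∨ j ∈ V) : (Tword n i j).Sublist (coverSupersequence n V) := by
  have hn : 1 ≤ n ^ 2 := Nat.one_le_pow _ _ (by omega)
  have hgap : 6 * n * (i - 1) + 6 * n * (j - i - 1) = 6 * n * (j - 1 - 1) := by
    rw [← mul_add, show i - 1 + (j - i - 1) = j - 1 - 1 by omega]
  have hpred : 6 * n * (j - 1 - 1) + 6 * n = 6 * n * (j - 1) := by
    rw [← Nat.mul_succ, show (j - 1 - 1).succ = j - 1 by omega]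
  have hrest : 6 * n * (j - 1 - 1) + 6 * n * (n + 2 - j) = 6 * n ^ 2 := by
    rw [← mul_add, show j - 1 - 1 + (n + 2 - j) = n by omega]
    ring
  rw [Tword_eq]
  rcases hV with hiV | hjV
  · have hmark := vertex_mem_coverMarks (i := j - 1) V (by omega) (by omega : j - 1 ≤ n)
    refine two_marks_sublist_markedWord _ _ (cover_mem_coverMarks n hiV) hmark
      ?_ ?_ ?_ ?_ <;> omega
  · have hmark := vertex_mem_coverMarks V hi (hij.le.trans hjn)
    refine two_marks_sublist_markedWord _ _ hmark (cover_mem_coverMarks n hjV)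
      ?_ ?_ ?_ ?_ <;> omega

end CoverSupersequence

theorem stmt_13 (n k : ℕ) (hn : 1 ≤ n) (E : Finset (ℕ × ℕ))
    (hE : ∀ e ∈ E, 1 ≤ e.1 ∧ e.1 < e.2 ∧ e.2 ≤ n)
    (hcov : ∃ V' : Finset ℕ, V' ⊆ Finset.Icc 1 n ∧ V'.card ≤ k ∧
      ∀ e ∈ E, e.1 ∈ V' ∨ e.2 ∈ V') :
    ∃ S : List (Fin 3), S.length ≤ 168 * n ^ 2 + 37 * n - 3 + k ∧
      (∀ i j, 1 ≤ i → i ≤ n → j ≤ 36 * n ^ 2 → (Xword n i j).Sublist S) ∧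
      (∀ e ∈ E, (Tword n e.1 e.2).Sublist S) := by
  obtain ⟨V, -, hcard, hV⟩ := hcov
  refine ⟨coverSupersequence n V, ?_, fun i j hi hin hj => ?_, fun e he => ?_⟩
  · exact (length_coverSupersequence_le hn V).trans (Nat.add_le_add_left hcard _)
  · exact Xword_sublist_coverSupersequence V hi hin hj
  · obtain ⟨hi, hij, hjn⟩ := hE e he
    exact Tword_sublist_coverSupersequence hi hij hjn (hV e he)
end

section
/- Let L be the set of all seven words of length 3 over Σ₂ = {0,1} except 111, i.e. L = {000, 001, 010, 011, 100, 101, 110}. Then 01010 is a common supersequence of L of length 5, every common supersequence of L has length at least 5, and 01010 is the unique common supersequence of L of length 5. -/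
/-- All seven words of length 3 over Σ₂ except 111. -/
def L18 : Set (List (Fin 2)) :=
  {[0, 0, 0], [0, 0, 1], [0, 1, 0], [0, 1, 1], [1, 0, 0], [1, 0, 1], [1, 1, 0]}

/-!
Consider words over two letters `a ≠ b`. A word `bⁱaw` of length `n + 1` is a subsequence of
`a(ba)ⁿ = (ab)ⁱa(ba)ⁿ⁻ⁱ`, since every letter of `w` can be taken from its own block `ba`.
Conversely, a common supersequence of length at most `2n + 1` contains `aⁿ⁺¹`, so at most `n` of its
letters are `b`. Since it contains `bⁱabⁿ⁻ⁱ` for every `i ≤ n`, it has exactly `n` letters `b`, with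
an `a` before the first, between any two consecutive ones and after the last. Hence it contains
`a(ba)ⁿ`, and the lengths force equality.
-/

section Words

variable {α : Type*} {a b : α}

theorem cons_sublist_append_iff_of_notMem {l u v : List α} (ha : a ∉ u) :
    (a :: l).Sublist (u ++ v) ↔ (a :: l).Sublist v := by
  induction u with
  | nil => rfl
  | cons c u ih =>
    obtain ⟨hac, hau⟩ := not_or.mp (List.mem_cons.not.mp ha)
    rw [List.cons_append, List.cons_sublist_cons', ih hau, or_iff_left (hac ·.1)]

theorem count_add_count_le_length [DecidableEq α] (hab : a ≠ b) (S : List α) :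
    S.count a + S.count b ≤ S.length := by
  induction S with
  | nil => rfl
  | cons c S ih => grind

theorem sublist_flatten_replicate_length {l w : List α} (hw : w ⊆ l) :
    w.Sublist (List.replicate w.length l).flatten := by
  induction w with
  | nil => exact List.nil_sublist _
  | cons c w ih =>
    obtain ⟨hc, hwl⟩ := List.cons_subset.mp hw
    exact (List.singleton_sublist.mpr hc).append (ih hwl)

/-- The words of length `n` over `{a, b}` other than `bⁿ`. -/
def wordsExceptReplicate (a b : α) (n : ℕ) : Set (List α) :=
  {w | w.length = n ∧ w ⊆ [a, b] ∧ w ≠ List.replicate n b}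

/-- The word `a(ba)ⁿ`, in which `a` and `b` alternate, of odd length `2n + 1`. -/
def alternatingWord (a b : α) (n : ℕ) : List α :=
  a :: (List.replicate n [b, a]).flatten

theorem length_alternatingWord (a b : α) (n : ℕ) : (alternatingWord a b n).length = 2 * n + 1 := by
  simp [alternatingWord, mul_comm]

theorem alternatingWord_succ (a b : α) (n : ℕ) :
    alternatingWord a b (n + 1) = a :: b :: alternatingWord a b n := rfl

theorem cons_sublist_alternatingWord {w : List α} (hw : w ⊆ [b, a]) :
    (a :: w).Sublist (alternatingWord a b w.length) :=
  (sublist_flatten_replicate_length hw).cons_cons a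

theorem sublist_alternatingWord {w : List α} {n : ℕ} (hw : w ∈ wordsExceptReplicate a b (n + 1)) :
    w.Sublist (alternatingWord a b n) := by
  induction n generalizing w with
  | zero =>
    obtain ⟨hlen, hsub, hne⟩ := hw
    obtain ⟨c, rfl⟩ := List.length_eq_one_iff.mp hlen
    have hcb : c ≠ b := by simpa using hne
    obtain rfl : c = a := by simpa [hcb] using hsub
    exact cons_sublist_alternatingWord (List.nil_subset _)
  | succ n ih =>
    obtain ⟨hlen, hsub, hne⟩ := hw
    obtain ⟨c, w, rfl⟩ := List.exists_cons_of_length_eq_add_one hlen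
    have hwlen : w.length = n + 1 := Nat.succ.inj hlen
    obtain ⟨hc, hwsub⟩ := List.cons_subset.mp hsub
    rcases List.mem_pair.mp hc with rfl | rfl
    · rw [← hwlen]
      exact cons_sublist_alternatingWord fun x hx => List.mem_pair.mpr
        (List.mem_pair.mp (hwsub hx)).symm
    · rw [alternatingWord_succ]
      have hwne : w ≠ List.replicate (n + 1) c := fun h => hne (congrArg (c :: ·) h)
      exact ((ih ⟨hwlen, hwsub, hwne⟩).cons_cons c).cons a

theorem alternatingWord_sublist [DecidableEq α] {n : ℕ} {S : List α} (hcount : S.count b ≤ n)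
    (hS : ∀ i j, i + j = n → (List.replicate i b ++ a :: List.replicate j b).Sublist S) :
    (alternatingWord a b n).Sublist S := by
  induction n generalizing S with
  | zero => exact hS 0 0 rfl
  | succ n ih =>
    have hbS : b ∈ S := (hS 1 n (add_comm 1 n)).subset List.mem_cons_self
    obtain ⟨u, v, rfl, hbu⟩ := List.eq_append_cons_of_mem hbS
    have hcount_v : v.count b ≤ n := by
      simpa [List.count_eq_zero_of_not_mem hbu] using hcount
    have hau : a ∈ u := by
      by_contra hau
      have h := (cons_sublist_append_iff_of_notMem hau).mp (hS 0 (n + 1) (zero_add _))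
      have := (List.Sublist.of_cons_cons h).count_le b
      rw [List.count_replicate_self] at this
      omega
    have hv : (alternatingWord a b n).Sublist v := by
      refine ih hcount_v fun i j hij => ?_
      have h := hS (i + 1) j (by omega)
      exact List.Sublist.of_cons_cons ((cons_sublist_append_iff_of_notMem hbu).mp h)
    rw [alternatingWord_succ]
    exact (List.singleton_sublist.mpr hau).append (hv.cons_cons b)

theorem alternatingWord_sublist_of_length_le (hab : a ≠ b) {n : ℕ} {S : List α}
    (hS : ∀ w ∈ wordsExceptReplicate a b (n + 1), w.Sublist S) (hlen : S.length ≤ 2 * n + 1) :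
    (alternatingWord a b n).Sublist S := by
  classical
  have hmem {w : List α} (hw : w.length = n + 1) (hsub : w ⊆ [a, b]) (ha : a ∈ w) :
      w ∈ wordsExceptReplicate a b (n + 1) :=
    ⟨hw, hsub, fun h => hab (List.eq_of_mem_replicate (h ▸ ha))⟩
  have hcount_a : n + 1 ≤ S.count a :=
    List.replicate_sublist_iff.mp (hS _ (hmem (by simp) (by grind) (by simp)))
  have hcount_b : S.count b ≤ n := by
    have := count_add_count_le_length hab S
    omega
  refine alternatingWord_sublist hcount_b fun i j hij => hS _ (hmem ?_ ?_ ?_)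
  · simp only [List.length_append, List.length_cons, List.length_replicate]
    omega
  · intro x
    grind
  · simp

end Words

theorem L18_eq_wordsExceptReplicate : L18 = wordsExceptReplicate 0 1 3 := by
  ext w
  constructor
  · revert w
    simp only [L18, Set.mem_insert_iff, Set.mem_singleton_iff, forall_eq_or_imp, forall_eq]
    simp [wordsExceptReplicate]
  · rintro ⟨hlen, -, hne⟩
    obtain ⟨x, y, z, rfl⟩ := List.length_eq_three.mp hlen
    fin_cases x <;> fin_cases y <;> fin_cases z <;> simp_all [L18]

theorem stmt_18_general {α : Type*} {a b : α} (hab : a ≠ b) (n : ℕ) :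
    (∀ w ∈ wordsExceptReplicate a b (n + 1), w.Sublist (alternatingWord a b n)) ∧
    (alternatingWord a b n).length = 2 * n + 1 ∧
    (∀ S : List α, (∀ w ∈ wordsExceptReplicate a b (n + 1), w.Sublist S) → 2 * n + 1 ≤ S.length) ∧
    (∀ S : List α, (∀ w ∈ wordsExceptReplicate a b (n + 1), w.Sublist S) →
      S.length = 2 * n + 1 → S = alternatingWord a b n) := by
  have hlen := length_alternatingWord a b n
  refine ⟨fun w => sublist_alternatingWord, hlen, fun S hS => ?_, fun S hS hSlen => ?_⟩
  · by_contra! h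
    have := (alternatingWord_sublist_of_length_le hab hS h.le).length_le
    omega
  · exact ((alternatingWord_sublist_of_length_le hab hS hSlen.le).eq_of_length
      (hlen.trans hSlen.symm)).symm

theorem stmt_18 :
    (∀ w ∈ L18, w.Sublist [0, 1, 0, 1, 0]) ∧
    ([0, 1, 0, 1, 0] : List (Fin 2)).length = 5 ∧
    (∀ S : List (Fin 2), (∀ w ∈ L18, w.Sublist S) → 5 ≤ S.length) ∧
    (∀ S : List (Fin 2), (∀ w ∈ L18, w.Sublist S) → S.length = 5 →
      S = [0, 1, 0, 1, 0]) :=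
  L18_eq_wordsExceptReplicate ▸ stmt_18_general zero_ne_one 2
end

section
/- Let τ : Σ₂* → Σ₃* be the word morphism with τ(0) = 02 and τ(1) = 12, and let L' = {τ(w) : w ∈ {0,1}³, w ≠ 111} over Σ₃ = {0,1,2}. Then 012012012 is a common supersequence of L' of length 9, every common supersequence of L' has length at least 9, and no common supersequence of L' of length 9 becomes the word 01010 after deleting all its occurrences of the letter 2. -/
/-- The morphism τ : Σ₂* → Σ₃* with τ(0) = 02 and τ(1) = 12. -/
def tau : List (Fin 2) → List (Fin 3)
  | [] => []
  | a :: w => (if a = 0 then [0, 2] else [1, 2]) ++ tau w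

/-- `L' = {τ(w) : w ∈ {0,1}³, w ≠ 111}`. -/
def L19 : Set (List (Fin 3)) :=
  {v | ∃ w : List (Fin 2), w.length = 3 ∧ w ≠ [1, 1, 1] ∧ v = tau w}

/-!
Every letter of `τ(w)` is followed by a separator `2`, so an embedding of `τ(w)` in `S` uses at most
one letter of each maximal block of `S` free of `2`.

Lower bound: if `S` has only three letters `2`, each of the first three blocks contains the
corresponding letters of both `001` and `110`, which gives six letters besides the separators.
Otherwise `S` has at least four letters `2`, and `000` and `110` force three letters `0` and two
letters `1`.

Shape: suppose deleting the letters `2` from `S` leaves `01010`. Two adjacent letters not separated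
by a `2` cannot both be used, nor can a last letter not followed by a `2`. The words `011`, `100`,
`001`, `110`, `000` thereby force a `2` after the first, second, ..., fifth letter respectively, so
`S` has length at least ten.
-/

open scoped List

section Punctuate

variable {α : Type*}

/-- The word obtained from `w` by inserting the separator `s` after each letter. Over the alphabet
`{0, 1, 2}` with `s = 2`, this is the morphism τ. -/
def punctuate (s : α) (w : List α) : List α :=
  w.flatMap fun a => [a, s]

theorem punctuate_cons (s a : α) (w : List α) :
    punctuate s (a :: w) = a :: s :: punctuate s w :=
  rfl

theorem punctuate_sublist_flatten_replicate {s : α} {w B : List α}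
    (h : ∀ a ∈ w, [a, s] <+ B) : punctuate s w <+ (List.replicate w.length B).flatten := by
  induction w with
  | nil => exact List.nil_sublist _
  | cons a w ih =>
    rw [List.forall_mem_cons] at h
    exact h.1.append (ih h.2)

theorem exists_eq_cons_of_punctuate_eq_append {s a : α} (ha : a ≠ s) {w l r : List α}
    (h : punctuate s w = l ++ a :: r) : ∃ r', r = s :: r' := by
  induction w generalizing l with
  | nil => simp [punctuate] at h
  | cons c w ih =>
    rw [punctuate_cons] at h
    match l with
    | [] => exact ⟨_, (List.cons.inj h).2.symm⟩
    | [_] => exact absurd (List.cons.inj (List.cons.inj h).2).1.symm ha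
    | _ :: _ :: l => exact ih (List.cons.inj (List.cons.inj h).2).2

variable [DecidableEq α] {s : α}

theorem length_le_count_punctuate (s : α) (w : List α) : w.length ≤ (punctuate s w).count s := by
  induction w with
  | nil => exact Nat.zero_le _
  | cons a w ih =>
    rw [punctuate_cons, List.length_cons]
    calc w.length + 1 ≤ (s :: punctuate s w).count s := by simpa using ih
      _ ≤ _ := (List.sublist_cons_self a _).count_le s

theorem filter_ne_punctuate {w : List α} (hw : s ∉ w) :
    (punctuate s w).filter (fun c => c ≠ s) = w := by
  induction w with
  | nil => rfl
  | cons a w ih =>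
    obtain ⟨ha, hw⟩ := List.ne_and_not_mem_of_not_mem_cons hw
    rw [punctuate_cons, List.filter_cons_of_pos (by simpa using Ne.symm ha),
      List.filter_cons_of_neg (by simp), ih hw]

theorem mem_and_punctuate_sublist_of_count_eq {a : α} {w B T : List α} (ha : a ≠ s) (hB : s ∉ B)
    (hT : T.count s = w.length) (h : punctuate s (a :: w) <+ B ++ s :: T) :
    a ∈ B ∧ punctuate s w <+ T := by
  obtain ⟨l, r, hlr, hl, hr⟩ := List.sublist_append_iff.1 h
  rw [punctuate_cons] at hlr
  match l with
  | [] =>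
    obtain rfl : a :: s :: punctuate s w = r := hlr
    have hcount := (List.Sublist.of_cons_of_ne ha hr).count_le s
    have hlen := length_le_count_punctuate s w
    rw [List.count_cons_of_ne ha, List.count_cons_self] at hcount
    omega
  | [b] =>
    obtain ⟨rfl, rfl⟩ := List.cons.inj hlr
    exact ⟨List.singleton_sublist.1 hl, List.cons_sublist_cons.1 hr⟩
  | b :: c :: l =>
    obtain ⟨-, hlr⟩ := List.cons.inj hlr
    obtain ⟨rfl, -⟩ := List.cons.inj hlr
    exact absurd (hl.subset (by simp)) hB

theorem three_mul_length_le_of_forall₂_ne {u v S : List α} (huv : List.Forall₂ (· ≠ ·) u v)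
    (hsu : s ∉ u) (hsv : s ∉ v) (hS : S.count s = u.length)
    (hu : punctuate s u <+ S) (hv : punctuate s v <+ S) : 3 * u.length ≤ S.length := by
  induction huv generalizing S with
  | nil => exact Nat.zero_le _
  | @cons a b u v hab huv ih =>
    obtain ⟨hsa, hsu⟩ := List.ne_and_not_mem_of_not_mem_cons hsu
    obtain ⟨hsb, hsv⟩ := List.ne_and_not_mem_of_not_mem_cons hsv
    have hsS : s ∈ S := List.count_pos_iff.1 (by simp [hS])
    obtain ⟨B, T, rfl, hB⟩ := List.eq_append_cons_of_mem hsS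
    have hT : T.count s = u.length := by
      simpa [List.count_eq_zero_of_not_mem hB] using hS
    obtain ⟨haB, huT⟩ := mem_and_punctuate_sublist_of_count_eq (Ne.symm hsa) hB hT hu
    obtain ⟨hbB, hvT⟩ :=
      mem_and_punctuate_sublist_of_count_eq (Ne.symm hsb) hB (hT.trans huv.length_eq) hv
    have hBlen : 2 ≤ B.length :=
      (List.subperm_of_subset (l₁ := [a, b]) (by simpa using hab) (by simp [haB, hbB])).length_le
    have hTlen := ih hsu hsv hT huT hvT
    simp only [List.length_append, List.length_cons]
    omega

theorem exists_eq_append_cons_head?_ne_of_length_lt {S : List α}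
    (h : S.length < 2 * (S.filter (fun c => c ≠ s)).length) :
    ∃ A a B, S = A ++ a :: B ∧ a ≠ s ∧ B.head? ≠ some s := by
  match S with
  | [] => simp at h
  | [a] =>
    refine ⟨[], a, [], rfl, ?_, by simp⟩
    rintro rfl
    simp at h
  | a :: b :: S =>
    by_cases ha : a = s
    · have hlt : (b :: S).length < 2 * ((b :: S).filter (fun c => c ≠ s)).length := by
        rw [List.filter_cons_of_neg (by simpa using ha), List.length_cons] at h
        omega
      obtain ⟨A, c, B, hS, hc⟩ := exists_eq_append_cons_head?_ne_of_length_lt hlt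
      exact ⟨a :: A, c, B, by rw [hS, List.cons_append], hc⟩
    by_cases hb : b = s
    · have hlt : S.length < 2 * (S.filter (fun c => c ≠ s)).length := by
        rw [List.filter_cons_of_pos (by simpa using ha),
          List.filter_cons_of_neg (by simpa using hb)] at h
        simp only [List.length_cons] at h
        omega
      obtain ⟨A, c, B, hS, hc⟩ := exists_eq_append_cons_head?_ne_of_length_lt hlt
      exact ⟨a :: b :: A, c, B, by rw [hS]; rfl, hc⟩
    · exact ⟨[], a, b :: S, rfl, ha, by simpa using hb⟩

theorem sublist_filter_or_exists_of_punctuate_sublist {a : α} {w A B : List α} (hw : s ∉ w)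
    (ha : a ≠ s) (hB : B.head? ≠ some s) (h : punctuate s w <+ A ++ a :: B) :
    w <+ (A ++ B).filter (fun c => c ≠ s) ∨
      ∃ b B', b ≠ s ∧ B = b :: B' ∧ w <+ (A ++ a :: B').filter (fun c => c ≠ s) := by
  obtain ⟨l, r, hlr, hl, hr⟩ := List.sublist_append_iff.1 h
  have sublist_of_sublist {U : List α} (hU : punctuate s w <+ U) :
      w <+ U.filter (fun c => c ≠ s) := by
    simpa only [filter_ne_punctuate hw] using hU.filter (fun c => c ≠ s)
  rcases List.sublist_cons_iff.1 hr with hrB | ⟨r, rfl, hrB⟩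
  · exact .inl (sublist_of_sublist (hlr ▸ hl.append hrB))
  · obtain ⟨r, rfl⟩ := exists_eq_cons_of_punctuate_eq_append ha hlr
    cases B with
    | nil => exact absurd hrB (by simp)
    | cons b B' =>
      have hb : b ≠ s := by simpa using hB
      have hrB' : s :: r <+ B' := hrB.of_cons_of_ne hb.symm
      exact .inr ⟨b, B', hb, rfl, sublist_of_sublist (hlr ▸ hl.append (hrB'.cons_cons a))⟩

/-- Position `i` of `p` holds a letter which `S` does not follow by `s`; an embedding of
`punctuate s w` misses that letter or the next one. -/
theorem exists_forall_sublist_eraseIdx_of_length_lt {S p : List α}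
    (hp : S.filter (fun c => c ≠ s) = p) (hS : S.length < 2 * p.length) :
    ∃ i < p.length, ∀ w, s ∉ w → punctuate s w <+ S →
      ∃ j < p.length, (j = i ∨ j = i + 1) ∧ w <+ p.eraseIdx j := by
  subst hp
  obtain ⟨A, a, B, rfl, ha, hB⟩ := exists_eq_append_cons_head?_ne_of_length_lt hS
  refine ⟨(A.filter (fun c => c ≠ s)).length, by simp [ha], fun w hw hwS => ?_⟩
  rcases sublist_filter_or_exists_of_punctuate_sublist hw ha hB hwS with
    hwAB | ⟨b, B', hb, rfl, hwAB⟩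
  · exact ⟨_, by simp [ha], .inl rfl, by simpa [ha, List.eraseIdx_append_of_length_le] using hwAB⟩
  · exact ⟨_, by simp [ha, hb], .inr rfl,
      by simpa [ha, hb, List.eraseIdx_append_of_length_le] using hwAB⟩

end Punctuate

theorem tau_eq_punctuate (w : List (Fin 2)) : tau w = punctuate 2 (w.map Fin.castSucc) := by
  induction w with
  | nil => rfl
  | cons a w ih =>
    rw [tau, ih, List.map_cons, punctuate_cons]
    fin_cases a <;> rfl

theorem punctuate_mem_L19 {w : List (Fin 2)} (hlen : w.length = 3) (hne : w ≠ [1, 1, 1]) :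
    punctuate 2 (w.map Fin.castSucc) ∈ L19 :=
  ⟨w, hlen, hne, (tau_eq_punctuate w).symm⟩

theorem tau_sublist_flatten_replicate (w : List (Fin 2)) :
    tau w <+ (List.replicate w.length [0, 1, 2]).flatten := by
  have hletter : ∀ a : Fin 2, [a.castSucc, 2] <+ [0, 1, 2] := by decide
  rw [tau_eq_punctuate, ← List.length_map Fin.castSucc]
  exact punctuate_sublist_flatten_replicate (List.forall_mem_map.2 fun a _ => hletter a)

theorem length_eq_count_add_count_add_count (S : List (Fin 3)) :
    S.length = S.count 0 + S.count 1 + S.count 2 := by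
  simpa [Fin.sum_univ_three] using
    (Multiset.sum_count_eq_card (s := Finset.univ) (m := (S : Multiset (Fin 3))) (by simp)).symm

theorem nine_le_length_of_forall_mem_L19_sublist {S : List (Fin 3)} (hS : ∀ v ∈ L19, v <+ S) :
    9 ≤ S.length := by
  have h000 : punctuate 2 [0, 0, 0] <+ S :=
    hS _ (punctuate_mem_L19 (w := [0, 0, 0]) rfl (by decide))
  have h001 : punctuate 2 [0, 0, 1] <+ S :=
    hS _ (punctuate_mem_L19 (w := [0, 0, 1]) rfl (by decide))
  have h110 : punctuate 2 [1, 1, 0] <+ S :=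
    hS _ (punctuate_mem_L19 (w := [1, 1, 0]) rfl (by decide))
  have hcount₂ : 3 ≤ S.count 2 := h000.count_le 2
  rcases hcount₂.eq_or_lt with hthree | hfour
  · exact three_mul_length_le_of_forall₂_ne (by simp) (by decide) (by decide) hthree.symm h001 h110
  · have hcount₀ : 3 ≤ S.count 0 := h000.count_le 0
    have hcount₁ : 2 ≤ S.count 1 := h110.count_le 1
    rw [length_eq_count_add_count_add_count]
    omega

theorem ten_le_length_of_filter_ne_two_eq {S : List (Fin 3)} (hS : ∀ v ∈ L19, v <+ S)
    (hfilter : S.filter (fun c => c ≠ 2) = [0, 1, 0, 1, 0]) : 10 ≤ S.length := by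
  by_contra! hlt
  obtain ⟨i, hi, hsub⟩ := exists_forall_sublist_eraseIdx_of_length_lt hfilter hlt
  have hforced : ∀ i < 5, ∃ w ∈ ([[0, 1, 1], [1, 0, 0], [0, 0, 1], [1, 1, 0], [0, 0, 0]] :
      List (List (Fin 2))), w.length = 3 ∧ w ≠ [1, 1, 1] ∧
        ∀ j < 5, (j = i ∨ j = i + 1) → ¬ w.map Fin.castSucc <+ [0, 1, 0, 1, 0].eraseIdx j := by
    decide
  obtain ⟨w, -, hlen, hne, hnot⟩ := hforced i hi
  have htwo : 2 ∉ w.map Fin.castSucc := by simp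
  obtain ⟨j, hj, hji, hwj⟩ := hsub _ htwo (hS _ (punctuate_mem_L19 hlen hne))
  exact hnot j hj hji hwj

theorem stmt_19 :
    (∀ v ∈ L19, v.Sublist [0, 1, 2, 0, 1, 2, 0, 1, 2]) ∧
    ([0, 1, 2, 0, 1, 2, 0, 1, 2] : List (Fin 3)).length = 9 ∧
    (∀ S : List (Fin 3), (∀ v ∈ L19, v.Sublist S) → 9 ≤ S.length) ∧
    (∀ S : List (Fin 3), (∀ v ∈ L19, v.Sublist S) → S.length = 9 →
      S.filter (fun c => c ≠ 2) ≠ [0, 1, 0, 1, 0]) := by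
  refine ⟨?_, rfl, fun S hS => nine_le_length_of_forall_mem_L19_sublist hS,
    fun S hS hlen hfilter => ?_⟩
  · rintro v ⟨w, hlen, -, rfl⟩
    simpa [hlen, List.replicate] using tau_sublist_flatten_replicate w
  · have hten := ten_le_length_of_filter_ne_two_eq hS hfilter
    omega
end
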